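/- Let S = Greedy-TM(1/2, c), where c is the vector of true costs, and for each winner i ∈ S let p_i = sup{ β > 0 : i ∈ Greedy-TM(1/2, (β, c_{−i})) } be its threshold payment. Then Σ_{i∈S} p_i ≤ B; that is, the mechanism Greedy-TM(1/2) with threshold payments is budget feasible. -/

import Mathlib

open Classical

/-- Marginal value `m_i(S) = v(S ∪ {i}) - v(S)`. -/
noncomputable def marg {ι : Type*} [DecidableEq ι] (v : Finset ι → ℝ) (S : Finset ι) (i : ι) : ℝ :=
  v (insert i S) - v S

/-- The next agent in the greedy order once the set `S` has been selected:
an agent of `Sᶜ` maximizing marginal value over bid, ties broken by the fixed linear order. -/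
noncomputable def pick {ι : Type*} [Fintype ι] [LinearOrder ι] [Nonempty ι]
    (v : Finset ι → ℝ) (b : ι → ℝ) (S : Finset ι) : ι :=
  if h : Sᶜ.Nonempty then
    (Sᶜ.filter fun j => ∀ j' ∈ Sᶜ, marg v S j' / b j' ≤ marg v S j / b j).min'
      (by
        obtain ⟨j, hj, hmax⟩ := Finset.exists_max_image Sᶜ (fun j => marg v S j / b j) h
        exact ⟨j, Finset.mem_filter.mpr ⟨hj, hmax⟩⟩)
  else Classical.arbitrary ι

/-- `greedySet v b t` is the set `S_t` of the first `t` agents in the greedy order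
computed with respect to the bid vector `b`. -/
noncomputable def greedySet {ι : Type*} [Fintype ι] [LinearOrder ι] [Nonempty ι]
    (v : Finset ι → ℝ) (b : ι → ℝ) : ℕ → Finset ι
  | 0 => ∅
  | t + 1 => insert (pick v b (greedySet v b t)) (greedySet v b t)

/-- `agent v b k` is the `k`-th agent `a_k` in the greedy order (1-indexed). -/
noncomputable def agent {ι : Type*} [Fintype ι] [LinearOrder ι] [Nonempty ι]
    (v : Finset ι → ℝ) (b : ι → ℝ) (k : ℕ) : ι :=
  pick v b (greedySet v b (k - 1))

/-- `optVal v b B A'` is the maximum of `v S` over `S ⊆ A'` with `∑_{i ∈ S} b i ≤ B`. -/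
noncomputable def optVal {ι : Type*} (v : Finset ι → ℝ) (b : ι → ℝ) (B : ℝ)
    (A' : Finset ι) : ℝ :=
  sSup (v '' {S : Finset ι | S ⊆ A' ∧ ∑ i ∈ S, b i ≤ B})

/-- The greedy threshold mechanism `Greedy-TM(γ, b)`: it outputs `S_{k-1}` where `k` is the
least index with `b_{a_k} · v(S_k) > γ · B · m_{a_k}(S_{k-1})`, and all of `A` if no such `k`
exists. -/
noncomputable def greedyTM {ι : Type*} [Fintype ι] [LinearOrder ι] [Nonempty ι]
    (v : Finset ι → ℝ) (B γ : ℝ) (b : ι → ℝ) : Finset ι :=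
  if h : ∃ k, (1 ≤ k ∧ k ≤ Fintype.card ι) ∧
      b (agent v b k) * v (greedySet v b k) >
        γ * B * marg v (greedySet v b (k - 1)) (agent v b k)
  then greedySet v b (Nat.find h - 1)
  else Finset.univ

/-- The exponential-time greedy oracle mechanism `Greedy-EOM(α, b)`: it outputs `S_{k-1}` where
`k` is the least index with `v(S_k) > α · opt_b(A, B)`, and all of `A` if no such `k` exists. -/
noncomputable def greedyEOM {ι : Type*} [Fintype ι] [LinearOrder ι] [Nonempty ι]
    (v : Finset ι → ℝ) (B α : ℝ) (b : ι → ℝ) : Finset ι :=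
  if h : ∃ k, (1 ≤ k ∧ k ≤ Fintype.card ι) ∧
      v (greedySet v b k) > α * optVal v b B Finset.univ
  then greedySet v b (Nat.find h - 1)
  else Finset.univ

/-- The greedy oracle mechanism `Greedy-OM(α, b)` with oracle `O`: it outputs
`{ a_t : 1 ≤ t ≤ n, v(S_t) ≤ α · O(b, A \ {a_t}) }`. -/
noncomputable def greedyOM {ι : Type*} [Fintype ι] [LinearOrder ι] [Nonempty ι]
    (v : Finset ι → ℝ) (O : (ι → ℝ) → Finset ι → ℝ) (α : ℝ) (b : ι → ℝ) : Finset ι :=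
  ((Finset.Icc 1 (Fintype.card ι)).filter
      (fun t => v (greedySet v b t) ≤ α * O b (Finset.univ.erase (agent v b t)))).image
    (fun t => agent v b t)

/-- An allocation rule `f`, mapping bid vectors with positive entries to subsets of the agents,
is monotone if a winner remains a winner after lowering his bid. -/
def MonotoneAlloc {ι : Type*} [DecidableEq ι] (f : (ι → ℝ) → Finset ι) : Prop :=
  ∀ b : ι → ℝ, (∀ j, 0 < b j) → ∀ i ∈ f b, ∀ β : ℝ, 0 < β → β ≤ b i →
    i ∈ f (Function.update b i β)

/-!
Put `K = γ B`, let `S` be the winners at costs `c`, and let `i ∈ S` be picked when the greedy set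
is `S_t`. Densities `m_j / c_j` decrease along the greedy order, so the acceptance test of the last
winner gives every winner a proportional share, `c_i v(S) ≤ K m_i(S_t)`; summing,
`∑_{j ∈ S} c_j ≤ K`.

Suppose `i` still wins after raising his bid to `β`, now picked when the greedy set is `T`. Raising
a bid only delays an agent, so `S_t ⊆ T`. The greedy choice of `i` at `T` and submodularity give
`β v(S) ≤ β v(T ∪ {i}) + m_i(T) ∑_{j ∈ S} c_j`, and the acceptance test for `i` bounds the first
term by `K m_i(T)`. Hence `β v(S) ≤ 2 K m_i(T) ≤ 2 K m_i(S_t)`. The marginals `m_i(S_t)` of the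
winners telescope to at most `v(S)`, so the threshold payments sum to at most `2 K`.
-/

section Valuation

variable {ι : Type*} [DecidableEq ι] {v : Finset ι → ℝ} {S T : Finset ι} {i : ι}

/-- Submodularity of a set function, in the lattice form. -/
def IsSubmodular (v : Finset ι → ℝ) : Prop :=
  ∀ S T : Finset ι, v (S ∪ T) + v (S ∩ T) ≤ v S + v T

lemma marg_nonneg (hmono : Monotone v) (S : Finset ι) (i : ι) : 0 ≤ marg v S i :=
  sub_nonneg.mpr (hmono (Finset.subset_insert i S))

lemma marg_eq_zero_of_mem (hi : i ∈ S) : marg v S i = 0 := by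
  rw [marg, Finset.insert_eq_of_mem hi, sub_self]

lemma IsSubmodular.marg_le_marg (hsub : IsSubmodular v) (hST : S ⊆ T) (hi : i ∉ T) :
    marg v T i ≤ marg v S i := by
  have h := hsub (insert i S) T
  rw [Finset.insert_union, Finset.union_eq_right.mpr hST, Finset.insert_inter_of_notMem hi,
    Finset.inter_eq_left.mpr hST] at h
  unfold marg
  linarith

lemma IsSubmodular.value_union_le (hsub : IsSubmodular v) (S U : Finset ι) :
    v (S ∪ U) ≤ v U + ∑ j ∈ S, marg v U j := by
  induction S using Finset.induction_on with
  | empty => simp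
  | insert a S ha ih =>
    have hstep : marg v (S ∪ U) a ≤ marg v U a := by
      by_cases haU : a ∈ U
      · rw [marg_eq_zero_of_mem haU, marg_eq_zero_of_mem (Finset.mem_union_right S haU)]
      · exact hsub.marg_le_marg Finset.subset_union_right (by simp [ha, haU])
    rw [Finset.sum_insert ha, Finset.insert_union]
    unfold marg at hstep ih ⊢
    linarith

lemma IsSubmodular.mul_value_le_of_forall_marg_mul_le (hsub : IsSubmodular v) (hmono : Monotone v)
    {c : ι → ℝ} (hc : ∀ j, 0 ≤ c j) {β : ℝ} (hβ : 0 ≤ β)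
    (hmax : ∀ j ∉ insert i T, marg v T j * β ≤ marg v T i * c j) (S : Finset ι) :
    β * v S ≤ β * v (insert i T) + marg v T i * ∑ j ∈ S, c j := by
  have hmarg : ∀ j ∈ S, β * marg v (insert i T) j ≤ marg v T i * c j := by
    intro j _
    by_cases hj : j ∈ insert i T
    · rw [marg_eq_zero_of_mem hj, mul_zero]
      exact mul_nonneg (marg_nonneg hmono T i) (hc j)
    · calc β * marg v (insert i T) j
          ≤ β * marg v T j := by
            gcongr
            exact hsub.marg_le_marg (Finset.subset_insert i T) hj
        _ = marg v T j * β := mul_comm _ _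
        _ ≤ marg v T i * c j := hmax j hj
  calc β * v S
      ≤ β * v (S ∪ insert i T) := by gcongr; exact hmono Finset.subset_union_left
    _ ≤ β * (v (insert i T) + ∑ j ∈ S, marg v (insert i T) j) := by
        gcongr
        exact hsub.value_union_le S (insert i T)
    _ = β * v (insert i T) + ∑ j ∈ S, β * marg v (insert i T) j := by rw [mul_add, Finset.mul_sum]
    _ ≤ β * v (insert i T) + ∑ j ∈ S, marg v T i * c j :=
        add_le_add_right (Finset.sum_le_sum hmarg) _
    _ = β * v (insert i T) + marg v T i * ∑ j ∈ S, c j := by rw [Finset.mul_sum]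

end Valuation

section ThresholdPayment

variable {ι : Type*} [DecidableEq ι] {f : (ι → ℝ) → Finset ι} {c : ι → ℝ} {i : ι}

/-- The threshold payment of agent `i` under the allocation rule `f`: the supremum of the bids with
which he wins against the bids `c` of the others. It is `0` if he wins with arbitrarily high bids,
since `sSup` of an unbounded set of reals is `0`. -/
noncomputable def thresholdPayment (f : (ι → ℝ) → Finset ι) (c : ι → ℝ) (i : ι) : ℝ :=
  sSup {β : ℝ | 0 < β ∧ i ∈ f (Function.update c i β)}

lemma thresholdPayment_eq_zero_of_forall_mem (h : ∀ β > 0, i ∈ f (Function.update c i β)) :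
    thresholdPayment f c i = 0 := by
  have hset : {β : ℝ | 0 < β ∧ i ∈ f (Function.update c i β)} = Set.Ioi 0 :=
    Set.ext fun β => ⟨And.left, fun hβ => ⟨hβ, h β hβ⟩⟩
  rw [thresholdPayment, hset, Real.sSup_of_not_bddAbove (not_bddAbove_Ioi 0)]

lemma thresholdPayment_le {p : ℝ} (hp : 0 ≤ p)
    (h : ∀ β > 0, i ∈ f (Function.update c i β) → β ≤ p) : thresholdPayment f c i ≤ p :=
  Real.sSup_le (fun β hβ => h β hβ.1 hβ.2) hp

end ThresholdPayment

section Greedy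

variable {ι : Type*} [Fintype ι] [LinearOrder ι] [Nonempty ι]
  {v : Finset ι → ℝ} {b c : ι → ℝ} {S : Finset ι} {i j : ι} {β B γ K : ℝ} {k l t u : ℕ}

lemma pick_mem_maximizers (v : Finset ι → ℝ) (b : ι → ℝ) (h : Sᶜ.Nonempty) :
    pick v b S ∈ Sᶜ.filter fun j => ∀ j' ∈ Sᶜ, marg v S j' / b j' ≤ marg v S j / b j := by
  rw [pick, dif_pos h]
  exact Finset.min'_mem _ _

lemma pick_notMem (v : Finset ι → ℝ) (b : ι → ℝ) (h : Sᶜ.Nonempty) : pick v b S ∉ S :=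
  Finset.mem_compl.mp (Finset.mem_filter.mp (pick_mem_maximizers v b h)).1

lemma marg_div_le_pick (v : Finset ι → ℝ) (b : ι → ℝ) (hj : j ∉ S) :
    marg v S j / b j ≤ marg v S (pick v b S) / b (pick v b S) :=
  have hj' := Finset.mem_compl.mpr hj
  (Finset.mem_filter.mp (pick_mem_maximizers v b ⟨j, hj'⟩)).2 j hj'

lemma marg_mul_le_pick (v : Finset ι → ℝ) (hb : ∀ j, 0 < b j) (hj : j ∉ S) :
    marg v S j * b (pick v b S) ≤ marg v S (pick v b S) * b j :=
  (div_le_div_iff₀ (hb _) (hb _)).mp (marg_div_le_pick v b hj)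

lemma pick_le_of_forall_marg_div_le (hj : j ∉ S)
    (hmax : ∀ j' ∉ S, marg v S j' / b j' ≤ marg v S j / b j) : pick v b S ≤ j := by
  have hj' := Finset.mem_compl.mpr hj
  rw [pick, dif_pos ⟨j, hj'⟩]
  exact Finset.min'_le _ _ <|
    Finset.mem_filter.mpr ⟨hj', fun j' h => hmax j' (Finset.mem_compl.mp h)⟩

lemma pick_update_of_ne (hmono : Monotone v) (hci : 0 < c i) (hβ : c i ≤ β)
    (hne : pick v c S ≠ i) : pick v (Function.update c i β) S = pick v c S := by
  by_cases hS : Sᶜ.Nonempty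
  swap
  · rw [pick, pick, dif_neg hS, dif_neg hS]
  have hdensity : ∀ j, marg v S j / Function.update c i β j ≤ marg v S j / c j := by
    intro j
    rcases eq_or_ne j i with rfl | hj
    · rw [Function.update_self]
      exact div_le_div_of_nonneg_left (marg_nonneg hmono S j) hci hβ
    · rw [Function.update_of_ne hj]
  have hbid : Function.update c i β (pick v c S) = c (pick v c S) := Function.update_of_ne hne _ _
  apply le_antisymm
  · refine pick_le_of_forall_marg_div_le (pick_notMem v c hS) fun j hj => ?_
    rw [hbid]
    exact (hdensity j).trans (marg_div_le_pick v c hj)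
  · refine pick_le_of_forall_marg_div_le (pick_notMem v _ hS) fun j hj => ?_
    have hpick := marg_div_le_pick v (Function.update c i β) (pick_notMem v c hS)
    rw [hbid] at hpick
    exact (marg_div_le_pick v c hj).trans (hpick.trans (hdensity _))

lemma greedySet_succ (v : Finset ι → ℝ) (b : ι → ℝ) (t : ℕ) :
    greedySet v b (t + 1) = insert (agent v b (t + 1)) (greedySet v b t) := rfl

lemma greedySet_monotone (v : Finset ι → ℝ) (b : ι → ℝ) : Monotone (greedySet v b) :=
  monotone_nat_of_le_succ fun _ => Finset.subset_insert _ _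

lemma mem_greedySet_iff : i ∈ greedySet v b k ↔ ∃ t < k, agent v b (t + 1) = i := by
  induction k with
  | zero => simp [greedySet]
  | succ k ih =>
    rw [greedySet_succ, Finset.mem_insert, ih, Nat.exists_lt_succ_right, or_comm, eq_comm]

lemma agent_notMem_of_card_lt (h : (greedySet v b t).card < Fintype.card ι) :
    agent v b (t + 1) ∉ greedySet v b t :=
  pick_notMem v b <| (Finset.compl_ne_univ_iff_nonempty _).mp <| by
    rw [compl_compl]
    exact fun huniv => h.ne ((Finset.card_eq_iff_eq_univ _).mpr huniv)

lemma card_greedySet (v : Finset ι → ℝ) (b : ι → ℝ) (ht : t ≤ Fintype.card ι) :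
    (greedySet v b t).card = t := by
  induction t with
  | zero => rfl
  | succ t ih =>
    have hcard := ih (Nat.le_of_succ_le ht)
    rw [greedySet_succ,
      Finset.card_insert_of_notMem (agent_notMem_of_card_lt (hcard.trans_lt ht)), hcard]

lemma agent_notMem (v : Finset ι → ℝ) (b : ι → ℝ) (ht : t < Fintype.card ι) :
    agent v b (t + 1) ∉ greedySet v b t :=
  agent_notMem_of_card_lt ((card_greedySet v b ht.le).trans_lt ht)

lemma sum_greedySet (v : Finset ι → ℝ) (b f : ι → ℝ) (hk : k ≤ Fintype.card ι) :
    ∑ i ∈ greedySet v b k, f i = ∑ t ∈ Finset.range k, f (agent v b (t + 1)) := by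
  induction k with
  | zero => rfl
  | succ k ih =>
    rw [greedySet_succ, Finset.sum_insert (agent_notMem v b hk), ih (Nat.le_of_succ_le hk),
      Finset.sum_range_succ, add_comm]

lemma sum_marg_agent (v : Finset ι → ℝ) (b : ι → ℝ) (k : ℕ) :
    ∑ t ∈ Finset.range k, marg v (greedySet v b t) (agent v b (t + 1)) =
      v (greedySet v b k) - v ∅ :=
  Finset.sum_range_sub (fun t => v (greedySet v b t)) k

lemma greedySet_update_of_notMem (hmono : Monotone v) (hci : 0 < c i) (hβ : c i ≤ β)
    (hi : i ∉ greedySet v c t) : greedySet v (Function.update c i β) t = greedySet v c t := by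
  induction t with
  | zero => rfl
  | succ t ih =>
    rw [greedySet_succ, Finset.mem_insert, not_or] at hi
    have hpick : pick v (Function.update c i β) (greedySet v c t) = agent v c (t + 1) :=
      pick_update_of_ne hmono hci hβ (Ne.symm hi.1)
    rw [greedySet, ih hi.2, hpick, greedySet_succ]

lemma greedySet_subset_greedySet_update (hmono : Monotone v) (hci : 0 < c i) (hβ : c i ≤ β)
    (hi : i ∉ greedySet v c t) (hu : agent v (Function.update c i β) (u + 1) = i) :
    greedySet v c t ⊆ greedySet v (Function.update c i β) u := by
  have hprefix := greedySet_update_of_notMem hmono hci hβ hi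
  have htu : t ≤ u := by
    by_contra! hut
    exact hi (hprefix ▸ mem_greedySet_iff.mpr ⟨u, hut, hu⟩)
  exact hprefix ▸ greedySet_monotone v _ htu

lemma marg_mul_agent_le_of_le (hsub : IsSubmodular v) (hb : ∀ j, 0 < b j) (htl : t ≤ l)
    (hl : l < Fintype.card ι) :
    marg v (greedySet v b l) (agent v b (l + 1)) * b (agent v b (t + 1)) ≤
      marg v (greedySet v b t) (agent v b (t + 1)) * b (agent v b (l + 1)) := by
  have hle := greedySet_monotone v b htl
  have hlast := agent_notMem v b hl
  calc marg v (greedySet v b l) (agent v b (l + 1)) * b (agent v b (t + 1))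
      ≤ marg v (greedySet v b t) (agent v b (l + 1)) * b (agent v b (t + 1)) :=
        mul_le_mul_of_nonneg_right (hsub.marg_le_marg hle hlast) (hb _).le
    _ ≤ marg v (greedySet v b t) (agent v b (t + 1)) * b (agent v b (l + 1)) :=
        marg_mul_le_pick v hb fun h => hlast (hle h)

lemma eq_zero_of_value_greedySet_nonpos (hv0 : 0 ≤ v ∅) (hmono : Monotone v)
    (hsub : IsSubmodular v) (hb : ∀ j, 0 < b j) (hk : 0 < k) (h : v (greedySet v b k) ≤ 0) :
    v = 0 := by
  have hfirst : marg v ∅ (pick v b ∅) ≤ 0 := by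
    have hle : v (insert (pick v b ∅) ∅) ≤ v (greedySet v b k) := hmono (greedySet_monotone v b hk)
    unfold marg
    linarith
  have hsingle : ∀ j, marg v ∅ j ≤ 0 := fun j =>
    nonpos_of_mul_nonpos_left
      ((marg_mul_le_pick v hb (Finset.notMem_empty j)).trans
        (mul_nonpos_of_nonpos_of_nonneg hfirst (hb j).le)) (hb _)
  funext S
  apply le_antisymm
  · calc v S = v (S ∪ ∅) := by rw [Finset.union_empty]
      _ ≤ v ∅ + ∑ j ∈ S, marg v ∅ j := hsub.value_union_le S ∅
      _ ≤ v (greedySet v b k) + 0 :=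
          add_le_add (hmono (Finset.empty_subset _)) (Finset.sum_nonpos fun j _ => hsingle j)
      _ ≤ 0 := by rwa [add_zero]
  · exact hv0.trans (hmono (Finset.empty_subset S))

/-- Each of the first `k` agents in the greedy order bids at most the fraction of `K` given by his
marginal contribution to `v (greedySet v b k)`, stated without division. -/
def ProportionalShare (v : Finset ι → ℝ) (b : ι → ℝ) (K : ℝ) (k : ℕ) : Prop :=
  ∀ t < k, b (agent v b (t + 1)) * v (greedySet v b k) ≤
    K * marg v (greedySet v b t) (agent v b (t + 1))

lemma proportionalShare_succ (hsub : IsSubmodular v) (hb : ∀ j, 0 < b j) (hK : 0 ≤ K)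
    (hl : l < Fintype.card ι)
    (hlast : b (agent v b (l + 1)) * v (greedySet v b (l + 1)) ≤
      K * marg v (greedySet v b l) (agent v b (l + 1))) :
    ProportionalShare v b K (l + 1) := by
  intro t ht
  refine le_of_mul_le_mul_left ?_ (hb (agent v b (l + 1)))
  calc b (agent v b (l + 1)) * (b (agent v b (t + 1)) * v (greedySet v b (l + 1)))
      = b (agent v b (t + 1)) * (b (agent v b (l + 1)) * v (greedySet v b (l + 1))) := by ring
    _ ≤ b (agent v b (t + 1)) * (K * marg v (greedySet v b l) (agent v b (l + 1))) :=
        mul_le_mul_of_nonneg_left hlast (hb _).le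
    _ = K * (marg v (greedySet v b l) (agent v b (l + 1)) * b (agent v b (t + 1))) := by ring
    _ ≤ K * (marg v (greedySet v b t) (agent v b (t + 1)) * b (agent v b (l + 1))) :=
        mul_le_mul_of_nonneg_left
          (marg_mul_agent_le_of_le hsub hb (Nat.le_of_lt_succ ht) hl) hK
    _ = b (agent v b (l + 1)) * (K * marg v (greedySet v b t) (agent v b (t + 1))) := by ring

lemma ProportionalShare.sum_le (hshare : ProportionalShare v b K k) (hv0 : 0 ≤ v ∅) (hK : 0 ≤ K)
    (hk : k ≤ Fintype.card ι) (hpos : 0 < v (greedySet v b k)) :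
    ∑ j ∈ greedySet v b k, b j ≤ K := by
  refine le_of_mul_le_mul_right ?_ hpos
  calc (∑ j ∈ greedySet v b k, b j) * v (greedySet v b k)
      = ∑ t ∈ Finset.range k, b (agent v b (t + 1)) * v (greedySet v b k) := by
        rw [sum_greedySet v b b hk, Finset.sum_mul]
    _ ≤ ∑ t ∈ Finset.range k, K * marg v (greedySet v b t) (agent v b (t + 1)) :=
        Finset.sum_le_sum fun t ht => hshare t (Finset.mem_range.mp ht)
    _ = K * (v (greedySet v b k) - v ∅) := by rw [← Finset.mul_sum, sum_marg_agent]
    _ ≤ K * v (greedySet v b k) := mul_le_mul_of_nonneg_left (sub_le_self _ hv0) hK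

lemma exists_greedyTM_eq_greedySet (v : Finset ι → ℝ) (B γ : ℝ) (b : ι → ℝ) :
    ∃ k ≤ Fintype.card ι, greedyTM v B γ b = greedySet v b k ∧
      ∀ t < k, b (agent v b (t + 1)) * v (greedySet v b (t + 1)) ≤
        γ * B * marg v (greedySet v b t) (agent v b (t + 1)) := by
  unfold greedyTM
  split_ifs with h
  · have hfind := Nat.find_spec h
    refine ⟨Nat.find h - 1, by omega, rfl, fun t ht => not_lt.mp fun hreject => ?_⟩
    exact Nat.find_min h (m := t + 1) (by omega) ⟨⟨by omega, by omega⟩, hreject⟩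
  · refine ⟨Fintype.card ι, le_rfl, ?_, fun t ht => not_lt.mp fun hreject => ?_⟩
    · exact ((Finset.card_eq_iff_eq_univ _).mp (card_greedySet v b le_rfl)).symm
    · exact h ⟨t + 1, ⟨by omega, ht⟩, hreject⟩

lemma exists_greedyTM_eq_greedySet_proportionalShare (hsub : IsSubmodular v) (hb : ∀ j, 0 < b j)
    (hγB : 0 ≤ γ * B) :
    ∃ k ≤ Fintype.card ι, greedyTM v B γ b = greedySet v b k ∧
      ProportionalShare v b (γ * B) k := by
  obtain ⟨k, hk, hTM, haccept⟩ := exists_greedyTM_eq_greedySet v B γ b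
  refine ⟨k, hk, hTM, ?_⟩
  cases k with
  | zero => exact fun t ht => absurd ht t.not_lt_zero
  | succ l => exact proportionalShare_succ hsub hb hγB hk (haccept l l.lt_succ_self)

lemma exists_agent_eq_of_mem_greedyTM (hi : i ∈ greedyTM v B γ b) :
    ∃ u < Fintype.card ι, agent v b (u + 1) = i ∧
      b i * v (insert i (greedySet v b u)) ≤ γ * B * marg v (greedySet v b u) i := by
  obtain ⟨k, hk, hTM, haccept⟩ := exists_greedyTM_eq_greedySet v B γ b
  obtain ⟨u, hu, rfl⟩ := mem_greedySet_iff.mp (hTM ▸ hi)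
  exact ⟨u, hu.trans_le hk, rfl, haccept u hu⟩

lemma greedyTM_zero (B γ : ℝ) (b : ι → ℝ) : greedyTM 0 B γ b = Finset.univ := by
  rw [greedyTM, dif_neg]
  simp [marg]

lemma bid_mul_value_le_of_mem_greedyTM_update (hmono : Monotone v) (hsub : IsSubmodular v)
    (hc : ∀ j, 0 < c j) (hi : i ∉ greedySet v c t) (hβ : c i ≤ β)
    (hwin : i ∈ greedyTM v B γ (Function.update c i β)) (hγB : 0 ≤ γ * B) (S : Finset ι) :
    β * v S ≤ (γ * B + ∑ j ∈ S, c j) * marg v (greedySet v c t) i := by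
  obtain ⟨u, hu, hagent, haccept⟩ := exists_agent_eq_of_mem_greedyTM hwin
  have hsubset := greedySet_subset_greedySet_update hmono (hc i) hβ hi hagent
  have hiT := agent_notMem v (Function.update c i β) hu
  have hβ0 : 0 < β := (hc i).trans_le hβ
  have hbid : ∀ j, 0 < Function.update c i β j := by
    intro j
    rcases eq_or_ne j i with rfl | hj
    · rwa [Function.update_self]
    · rw [Function.update_of_ne hj]; exact hc j
  have hpick : pick v (Function.update c i β) (greedySet v (Function.update c i β) u) = i := hagent
  rw [hagent] at hiT
  rw [Function.update_self] at haccept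
  set T := greedySet v (Function.update c i β) u
  have hmax : ∀ j ∉ insert i T, marg v T j * β ≤ marg v T i * c j := by
    intro j hj
    rw [Finset.mem_insert, not_or] at hj
    have hle := marg_mul_le_pick v hbid hj.2
    rwa [hpick, Function.update_self, Function.update_of_ne hj.1] at hle
  calc β * v S
      ≤ β * v (insert i T) + marg v T i * ∑ j ∈ S, c j :=
        hsub.mul_value_le_of_forall_marg_mul_le hmono (fun j => (hc j).le) hβ0.le hmax S
    _ ≤ γ * B * marg v T i + marg v T i * ∑ j ∈ S, c j := by gcongr
    _ = (γ * B + ∑ j ∈ S, c j) * marg v T i := by ring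
    _ ≤ (γ * B + ∑ j ∈ S, c j) * marg v (greedySet v c t) i :=
        mul_le_mul_of_nonneg_left (hsub.marg_le_marg hsubset hiT)
          (add_nonneg hγB (Finset.sum_nonneg fun j _ => (hc j).le))

lemma ProportionalShare.thresholdPayment_agent_le (hshare : ProportionalShare v c (γ * B) k)
    (hv0 : 0 ≤ v ∅) (hmono : Monotone v) (hsub : IsSubmodular v) (hc : ∀ j, 0 < c j)
    (hγB : 0 ≤ γ * B) (hk : k ≤ Fintype.card ι) (hpos : 0 < v (greedySet v c k)) (ht : t < k) :
    thresholdPayment (greedyTM v B γ) c (agent v c (t + 1)) ≤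
      2 * (γ * B) * marg v (greedySet v c t) (agent v c (t + 1)) / v (greedySet v c k) := by
  have hmarg := marg_nonneg hmono (greedySet v c t) (agent v c (t + 1))
  refine thresholdPayment_le (by positivity) fun β _ hwin => (le_div_iff₀ hpos).mpr ?_
  rcases le_total β (c (agent v c (t + 1))) with hle | hge
  · calc β * v (greedySet v c k)
        ≤ c (agent v c (t + 1)) * v (greedySet v c k) := by gcongr
      _ ≤ γ * B * marg v (greedySet v c t) (agent v c (t + 1)) := hshare t ht
      _ ≤ 2 * (γ * B) * marg v (greedySet v c t) (agent v c (t + 1)) :=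
          mul_le_mul_of_nonneg_right (le_mul_of_one_le_left hγB one_le_two) hmarg
  · have hcost := hshare.sum_le hv0 hγB hk hpos
    calc β * v (greedySet v c k)
        ≤ (γ * B + ∑ j ∈ greedySet v c k, c j) *
            marg v (greedySet v c t) (agent v c (t + 1)) :=
          bid_mul_value_le_of_mem_greedyTM_update hmono hsub hc
            (agent_notMem v c (ht.trans_le hk)) hge hwin hγB _
      _ ≤ 2 * (γ * B) * marg v (greedySet v c t) (agent v c (t + 1)) := by
          gcongr
          linarith

lemma ProportionalShare.sum_thresholdPayment_le (hshare : ProportionalShare v c (γ * B) k)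
    (hv0 : 0 ≤ v ∅) (hmono : Monotone v) (hsub : IsSubmodular v) (hc : ∀ j, 0 < c j)
    (hγB : 0 ≤ γ * B) (hk : k ≤ Fintype.card ι) (hpos : 0 < v (greedySet v c k)) :
    ∑ i ∈ greedySet v c k, thresholdPayment (greedyTM v B γ) c i ≤ 2 * (γ * B) := by
  calc ∑ i ∈ greedySet v c k, thresholdPayment (greedyTM v B γ) c i
      = ∑ t ∈ Finset.range k, thresholdPayment (greedyTM v B γ) c (agent v c (t + 1)) :=
        sum_greedySet v c _ hk
    _ ≤ ∑ t ∈ Finset.range k,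
          2 * (γ * B) * marg v (greedySet v c t) (agent v c (t + 1)) / v (greedySet v c k) :=
        Finset.sum_le_sum fun t ht =>
          hshare.thresholdPayment_agent_le hv0 hmono hsub hc hγB hk hpos (Finset.mem_range.mp ht)
    _ = 2 * (γ * B) * (v (greedySet v c k) - v ∅) / v (greedySet v c k) := by
        rw [← Finset.sum_div, ← Finset.mul_sum, sum_marg_agent]
    _ ≤ 2 * (γ * B) := by
        rw [div_le_iff₀ hpos]
        exact mul_le_mul_of_nonneg_left (sub_le_self _ hv0) (by positivity)

theorem greedyTM_budget_feasible_general (hv0 : 0 ≤ v ∅) (hmono : Monotone v)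
    (hsub : IsSubmodular v) (hγ : 0 ≤ γ) (hB : 0 ≤ B) (hc : ∀ i, 0 < c i) :
    ∑ i ∈ greedyTM v B γ c, thresholdPayment (greedyTM v B γ) c i ≤ 2 * γ * B := by
  have hγB := mul_nonneg hγ hB
  obtain ⟨k, hk, hTM, hshare⟩ := exists_greedyTM_eq_greedySet_proportionalShare hsub hc hγB
  rw [hTM, mul_assoc]
  rcases lt_or_ge 0 (v (greedySet v c k)) with hpos | hnonpos
  · exact hshare.sum_thresholdPayment_le hv0 hmono hsub hc hγB hk hpos
  rcases k.eq_zero_or_pos with rfl | hk0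
  · simpa [greedySet] using hγB
  -- Here `v = 0`: every bid wins, and the payments are the junk value `0` of `sSup`.
  obtain rfl := eq_zero_of_value_greedySet_nonpos hv0 hmono hsub hc hk0 hnonpos
  have hpay : ∀ i, thresholdPayment (greedyTM 0 B γ) c i = 0 := fun i =>
    thresholdPayment_eq_zero_of_forall_mem fun β _ => by simp [greedyTM_zero]
  simpa [hpay] using hγB

end Greedy

/-- `Greedy-TM(1/2)` with threshold payments is budget feasible
(Theorem 3.4). -/
theorem greedyTM_budget_feasible {ι : Type*} [Fintype ι] [LinearOrder ι] [Nonempty ι]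
    (v : Finset ι → ℝ) (hv0 : v (∅ : Finset ι) = 0)
    (hvmono : ∀ S T : Finset ι, S ⊆ T → v S ≤ v T)
    (hvsub : ∀ S T : Finset ι, v (S ∪ T) + v (S ∩ T) ≤ v S + v T)
    (B : ℝ) (hB : 0 < B)
    (c : ι → ℝ) (hc : ∀ i, 0 < c i) (hcB : ∀ i, c i ≤ B) :
    ∑ i ∈ greedyTM v B (1 / 2) c,
      sSup {β : ℝ | 0 < β ∧ i ∈ greedyTM v B (1 / 2) (Function.update c i β)} ≤ B := by
  have hgeneral := greedyTM_budget_feasible_general hv0.ge (fun S T => hvmono S T) hvsub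
    one_half_pos.le hB.le hc
  rwa [mul_one_div_cancel two_ne_zero, one_mul] at hgeneral
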